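/- arXiv:2106.15676 — 3 statements merged into one kernel-verified Lean document; each statement's English description precedes it below -/
import Mathlib

section
/- Let d ≥ 2, κ ≥ 1, and let A₁,…,A_κ ∈ SL(d,ℝ). For ω ∈ Σ_κ := {1,…,κ}^ℤ and n ≥ 1 write A⁽ⁿ⁾(ω) := A_{ω_{n−1}} ⋯ A_{ω_1} A_{ω_0}. Assume: (1) the closure in SL(d,ℝ) of the subgroup generated by {A₁,…,A_κ} is not compact; (2) the family (A₁,…,A_κ) is strongly projectively accessible. Then there exist a residual subset 𝓡 ⊆ Σ_κ and a dense subset 𝓓 ⊆ ℝ^d ∖ {0} such that for every ω ∈ 𝓡 and every v ∈ 𝓓 one has liminf_{n→∞} (1/n) log ‖A⁽ⁿ⁾(ω) v‖ < limsup_{n→∞} (1/n) log ‖A⁽ⁿ⁾(ω) v‖ (Euclidean norm on ℝ^d). -/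
open Filter Topology Metric

noncomputable section

/-- The action of a `d × d` real matrix on Euclidean space `ℝ^d`. -/
def mvec {d : ℕ} (B : Matrix (Fin d) (Fin d) ℝ) (v : EuclideanSpace ℝ (Fin d)) :
    EuclideanSpace ℝ (Fin d) :=
  Matrix.toEuclideanLin B v

/-- The random product `A⁽ⁿ⁾(ω) = A_{ω_{n-1}} ⋯ A_{ω_1} A_{ω_0}` of the matrices `A i`
along the two-sided sequence `ω`. -/
def cocycleProd {d κ : ℕ} (A : Fin κ → Matrix.SpecialLinearGroup (Fin d) ℝ)
    (ω : ℤ → Fin κ) : ℕ → Matrix.SpecialLinearGroup (Fin d) ℝ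
  | 0 => 1
  | n + 1 => A (ω n) * cocycleProd A ω n

/-- The projectivized action `g_B(v) = B·v / ‖B·v‖` on the unit sphere. -/
def projMap {d : ℕ} (B : Matrix (Fin d) (Fin d) ℝ) (v : EuclideanSpace ℝ (Fin d)) :
    EuclideanSpace ℝ (Fin d) :=
  ‖mvec B v‖⁻¹ • mvec B v

/-- The composition `g_{A_{ω_{p-1}}} ∘ ⋯ ∘ g_{A_{ω_0}}` of the projectivized maps along
a finite word `w = (ω₀, …, ω_{p-1})`. -/
def projWordComp {d κ : ℕ} (A : Fin κ → Matrix.SpecialLinearGroup (Fin d) ℝ)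
    (w : List (Fin κ)) (v : EuclideanSpace ℝ (Fin d)) : EuclideanSpace ℝ (Fin d) :=
  w.foldl (fun u i => projMap (A i : Matrix (Fin d) (Fin d) ℝ) u) v

/-- The unit sphere `S^{d-1} ⊆ ℝ^d`, a double cover of the projective space. -/
def unitSphere (d : ℕ) : Set (EuclideanSpace ℝ (Fin d)) :=
  Metric.sphere (0 : EuclideanSpace ℝ (Fin d)) 1

/-- Strong projective accessibility of the family `(A₁, …, A_κ)`, formulated on the
unit sphere: for every `ε > 0` there is `K(ε)` such that any `ε`-ball around a direction
can be mapped, by the projective action of a word of length at most `K(ε)`, onto a set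
containing a definite sub-ball of any prescribed ball of radius `δ ≤ ε`. -/
def StronglyProjectivelyAccessible {d κ : ℕ}
    (A : Fin κ → Matrix.SpecialLinearGroup (Fin d) ℝ) : Prop :=
  ∀ ε : ℝ, 0 < ε → ∃ K : ℕ, ∀ v₁ ∈ unitSphere d, ∀ v₂ ∈ unitSphere d,
    ∀ δ : ℝ, 0 < δ → δ ≤ ε →
      ∃ p ≤ K, ∃ w : List (Fin κ), w.length = p ∧ ∃ u ∈ unitSphere d,
        Metric.ball u (min (ε / 4) (δ / 2)) ∩ unitSphere d ⊆
          (projWordComp A w '' (Metric.ball v₁ ε ∩ unitSphere d)) ∩ Metric.ball v₂ δ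

section Action

variable {d κ : ℕ}

lemma mvec_mul (B C : Matrix (Fin d) (Fin d) ℝ) (v : EuclideanSpace ℝ (Fin d)) :
    mvec (B * C) v = mvec B (mvec C v) := by
  simp [mvec, Matrix.toLpLin_apply, Matrix.mulVec_mulVec]

lemma mvec_one (v : EuclideanSpace ℝ (Fin d)) : mvec 1 v = v := by
  simp [mvec]

lemma mvec_smul (B : Matrix (Fin d) (Fin d) ℝ) (c : ℝ) (v : EuclideanSpace ℝ (Fin d)) :
    mvec B (c • v) = c • mvec B v :=
  map_smul _ _ _

lemma mvec_add (B : Matrix (Fin d) (Fin d) ℝ) (v w : EuclideanSpace ℝ (Fin d)) :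
    mvec B (v + w) = mvec B v + mvec B w :=
  map_add _ _ _

lemma mvec_zero (B : Matrix (Fin d) (Fin d) ℝ) : mvec B 0 = 0 :=
  map_zero _

lemma continuous_mvec (B : Matrix (Fin d) (Fin d) ℝ) : Continuous (mvec B) :=
  LinearMap.continuous_of_finiteDimensional (Matrix.toEuclideanLin B)

lemma mvec_inv_mvec (g : Matrix.SpecialLinearGroup (Fin d) ℝ) (v : EuclideanSpace ℝ (Fin d)) :
    mvec ((g⁻¹ : Matrix.SpecialLinearGroup (Fin d) ℝ) : Matrix (Fin d) (Fin d) ℝ)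
      (mvec (g : Matrix (Fin d) (Fin d) ℝ) v) = v := by
  rw [← mvec_mul, ← Matrix.SpecialLinearGroup.coe_mul, inv_mul_cancel,
    Matrix.SpecialLinearGroup.coe_one, mvec_one]

lemma mvec_mvec_inv (g : Matrix.SpecialLinearGroup (Fin d) ℝ) (v : EuclideanSpace ℝ (Fin d)) :
    mvec (g : Matrix (Fin d) (Fin d) ℝ)
      (mvec ((g⁻¹ : Matrix.SpecialLinearGroup (Fin d) ℝ) : Matrix (Fin d) (Fin d) ℝ) v) = v := by
  simpa using mvec_inv_mvec g⁻¹ v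

lemma mvec_ne_zero (g : Matrix.SpecialLinearGroup (Fin d) ℝ) {v : EuclideanSpace ℝ (Fin d)}
    (hv : v ≠ 0) : mvec (g : Matrix (Fin d) (Fin d) ℝ) v ≠ 0 := by
  intro h
  apply hv
  rw [← mvec_inv_mvec g v, h, mvec_zero]

lemma exists_unit_norm_mvec_le (hd : 2 ≤ d) {M : Matrix (Fin d) (Fin d) ℝ} (hM : M.det = 1) :
    ∃ v ∈ unitSphere d, ‖mvec M v‖ ≤ 1 := by
  have hH : (M.conjTranspose * M).IsHermitian := Matrix.isHermitian_conjTranspose_mul_self M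
  have hprod : ∏ i, hH.eigenvalues i = 1 := by
    have h := hH.det_eq_prod_eigenvalues
    rw [Matrix.det_mul, Matrix.det_conjTranspose] at h
    simpa [hM] using h.symm
  obtain ⟨i, hi⟩ : ∃ i, hH.eigenvalues i ≤ 1 := by
    by_contra! hcon
    have : Nonempty (Fin d) := ⟨⟨0, by omega⟩⟩
    have hlt : ∏ i : Fin d, (1 : ℝ) < ∏ i, hH.eigenvalues i :=
      Finset.prod_lt_prod_of_nonempty (fun _ _ => one_pos) (fun i _ => hcon i)
        Finset.univ_nonempty
    rw [hprod, Finset.prod_const_one] at hlt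
    exact lt_irrefl _ hlt
  have hunit : ‖hH.eigenvectorBasis i‖ = 1 := hH.eigenvectorBasis.orthonormal.1 i
  refine ⟨hH.eigenvectorBasis i, by simp [unitSphere], ?_⟩
  have hsq : ‖mvec M (hH.eigenvectorBasis i)‖ ^ 2 = hH.eigenvalues i := by
    have h1 : (mvec M (hH.eigenvectorBasis i)) =
        WithLp.toLp 2 (M.mulVec (hH.eigenvectorBasis i).ofLp) := by
      simp [mvec, Matrix.toLpLin_apply]
    have h2 := hH.mulVec_eigenvectorBasis i
    have h3 : (hH.eigenvectorBasis i).ofLp ⬝ᵥ (hH.eigenvectorBasis i).ofLp = 1 := by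
      have h := EuclideanSpace.real_norm_sq_eq (hH.eigenvectorBasis i)
      rw [hunit] at h
      simp only [dotProduct, ← pow_two]
      linarith
    rw [h1, EuclideanSpace.real_norm_sq_eq]
    have h4 : ∑ j, (M.mulVec (hH.eigenvectorBasis i).ofLp) j ^ 2 =
        (M.mulVec (hH.eigenvectorBasis i).ofLp) ⬝ᵥ (M.mulVec (hH.eigenvectorBasis i).ofLp) := by
      simp [dotProduct, pow_two]
    rw [h4, Matrix.dotProduct_mulVec, ← Matrix.vecMul_transpose, Matrix.vecMul_vecMul,
      ← Matrix.dotProduct_mulVec, ← Matrix.conjTranspose_eq_transpose_of_trivial, h2,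
      dotProduct_smul, h3, smul_eq_mul, mul_one]
  nlinarith [norm_nonneg (mvec M (hH.eigenvectorBasis i))]

end Action

section Words

variable {d κ : ℕ}

/-- The matrix product `A_{w_{p-1}} ⋯ A_{w_0}` along a finite word `w`. -/
def wordProd (A : Fin κ → Matrix.SpecialLinearGroup (Fin d) ℝ) :
    List (Fin κ) → Matrix.SpecialLinearGroup (Fin d) ℝ
  | [] => 1
  | i :: w => wordProd A w * A i

variable (A : Fin κ → Matrix.SpecialLinearGroup (Fin d) ℝ)

lemma wordProd_append (u w : List (Fin κ)) :
    wordProd A (u ++ w) = wordProd A w * wordProd A u := by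
  induction u with
  | nil => simp [wordProd]
  | cons i u ih => simp [wordProd, ih, mul_assoc]

lemma mvec_wordProd_cons (i : Fin κ) (w : List (Fin κ)) (x : EuclideanSpace ℝ (Fin d)) :
    mvec (wordProd A (i :: w) : Matrix (Fin d) (Fin d) ℝ) x =
      mvec (wordProd A w : Matrix (Fin d) (Fin d) ℝ)
        (mvec (A i : Matrix (Fin d) (Fin d) ℝ) x) := by
  rw [wordProd, Matrix.SpecialLinearGroup.coe_mul, mvec_mul]

lemma mvec_wordProd_append (u w : List (Fin κ)) (x : EuclideanSpace ℝ (Fin d)) :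
    mvec (wordProd A (u ++ w) : Matrix (Fin d) (Fin d) ℝ) x =
      mvec (wordProd A w : Matrix (Fin d) (Fin d) ℝ)
        (mvec (wordProd A u : Matrix (Fin d) (Fin d) ℝ) x) := by
  rw [wordProd_append, Matrix.SpecialLinearGroup.coe_mul, mvec_mul]

lemma mvec_wordProd_nil (x : EuclideanSpace ℝ (Fin d)) :
    mvec (wordProd A [] : Matrix (Fin d) (Fin d) ℝ) x = x := by
  rw [wordProd, Matrix.SpecialLinearGroup.coe_one, mvec_one]

lemma projWordComp_eq (w : List (Fin κ)) {x : EuclideanSpace ℝ (Fin d)}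
    (hx : x ∈ unitSphere d) :
    projWordComp A w x = projMap (wordProd A w : Matrix (Fin d) (Fin d) ℝ) x := by
  induction w generalizing x with
  | nil =>
    have hx1 : ‖x‖ = 1 := by simpa [unitSphere] using hx
    simp [projWordComp, projMap, mvec_wordProd_nil, hx1]
  | cons i w ih =>
    have hx0 : x ≠ 0 := by
      rintro rfl
      simp [unitSphere] at hx
    have hy : ‖mvec (A i : Matrix (Fin d) (Fin d) ℝ) x‖ ≠ 0 :=
      norm_ne_zero_iff.2 (mvec_ne_zero _ hx0)
    have hmem : projMap (A i : Matrix (Fin d) (Fin d) ℝ) x ∈ unitSphere d := by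
      simp [unitSphere, projMap, norm_smul, hy]
    have h := ih hmem
    change projWordComp A w (projMap (A i : Matrix (Fin d) (Fin d) ℝ) x) = _
    rw [h, projMap, projMap, projMap, mvec_smul, ← mvec_wordProd_cons, norm_smul, smul_smul]
    congr 1
    rw [norm_inv, norm_norm, mul_inv, inv_inv]
    field_simp

lemma cocycleProd_congr {ω ω' : ℤ → Fin κ} {m : ℕ} (h : ∀ i : ℤ, i < m → ω' i = ω i) :
    cocycleProd A ω' m = cocycleProd A ω m := by
  induction m with
  | zero => rfl
  | succ m ih =>
    rw [cocycleProd, cocycleProd, h m (by push_cast; omega),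
      ih fun i hi => h i (by push_cast; omega)]

lemma exists_extension (w : List (Fin κ)) (ω : ℤ → Fin κ) (m : ℕ) :
    ∃ ω' : ℤ → Fin κ, (∀ i : ℤ, i < m → ω' i = ω i) ∧
      cocycleProd A ω' (m + w.length) = wordProd A w * cocycleProd A ω m := by
  induction w generalizing ω m with
  | nil => exact ⟨ω, fun _ _ => rfl, by simp [wordProd]⟩
  | cons i w ih =>
    obtain ⟨ω', h1, h2⟩ := ih (Function.update ω m i) (m + 1)
    have hupd : ∀ j : ℤ, j < m → Function.update ω m i j = ω j := fun j hj =>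
      Function.update_of_ne hj.ne _ _
    refine ⟨ω', fun j hj => ?_, ?_⟩
    · rw [h1 j (by push_cast; omega), hupd j hj]
    · rw [List.length_cons, show m + (w.length + 1) = m + 1 + w.length by ring, h2, cocycleProd,
        cocycleProd_congr A hupd, Function.update_self, wordProd, mul_assoc]

lemma exists_norm_bound : ∃ C : ℝ, 1 ≤ C ∧ ∀ (i : Fin κ) (x : EuclideanSpace ℝ (Fin d)),
    ‖mvec (A i : Matrix (Fin d) (Fin d) ℝ) x‖ ≤ C * ‖x‖ ∧
      ‖x‖ ≤ C * ‖mvec (A i : Matrix (Fin d) (Fin d) ℝ) x‖ := by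
  have hB : ∀ B : Matrix (Fin d) (Fin d) ℝ, ∃ c : ℝ, 0 ≤ c ∧
      ∀ x : EuclideanSpace ℝ (Fin d), ‖mvec B x‖ ≤ c * ‖x‖ := fun B =>
    ⟨‖LinearMap.toContinuousLinearMap (Matrix.toEuclideanLin B)‖, norm_nonneg _, fun x =>
      (LinearMap.toContinuousLinearMap (Matrix.toEuclideanLin B)).le_opNorm x⟩
  choose c hc0 hc using hB
  set a : Fin κ → ℝ := fun i => c (A i : Matrix (Fin d) (Fin d) ℝ) +
    c ((A i)⁻¹ : Matrix.SpecialLinearGroup (Fin d) ℝ) with ha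
  have ha0 : ∀ i, 0 ≤ a i := fun i => add_nonneg (hc0 _) (hc0 _)
  have hle : ∀ i, a i ≤ 1 + ∑ j, a j := fun i => by
    have := Finset.single_le_sum (f := a) (fun j _ => ha0 j) (Finset.mem_univ i)
    linarith
  refine ⟨1 + ∑ j, a j, by linarith [Finset.sum_nonneg fun j (_ : j ∈ Finset.univ) => ha0 j],
    fun i x => ⟨(hc _ x).trans ?_, ?_⟩⟩
  · gcongr
    linarith [hle i, hc0 ((A i)⁻¹ : Matrix.SpecialLinearGroup (Fin d) ℝ)]
  · conv_lhs => rw [← mvec_inv_mvec (A i) x]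
    refine (hc _ _).trans ?_
    gcongr
    linarith [hle i, hc0 (A i : Matrix (Fin d) (Fin d) ℝ)]

lemma norm_mvec_wordProd_le {C : ℝ} (hC : 1 ≤ C)
    (h : ∀ (i : Fin κ) (x : EuclideanSpace ℝ (Fin d)),
      ‖mvec (A i : Matrix (Fin d) (Fin d) ℝ) x‖ ≤ C * ‖x‖)
    (w : List (Fin κ)) (x : EuclideanSpace ℝ (Fin d)) :
    ‖mvec (wordProd A w : Matrix (Fin d) (Fin d) ℝ) x‖ ≤ C ^ w.length * ‖x‖ := by
  induction w generalizing x with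
  | nil => simp [mvec_wordProd_nil]
  | cons i w ih =>
    rw [mvec_wordProd_cons, List.length_cons, pow_succ, mul_assoc]
    exact (ih _).trans (by gcongr; exact h i x)

lemma norm_mvec_cocycleProd_bounds {C : ℝ} (hC : 1 ≤ C)
    (h : ∀ (i : Fin κ) (x : EuclideanSpace ℝ (Fin d)),
      ‖mvec (A i : Matrix (Fin d) (Fin d) ℝ) x‖ ≤ C * ‖x‖ ∧
        ‖x‖ ≤ C * ‖mvec (A i : Matrix (Fin d) (Fin d) ℝ) x‖)
    (ω : ℤ → Fin κ) (v : EuclideanSpace ℝ (Fin d)) (n : ℕ) :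
    ‖mvec (cocycleProd A ω n : Matrix (Fin d) (Fin d) ℝ) v‖ ≤ C ^ n * ‖v‖ ∧
      ‖v‖ ≤ C ^ n * ‖mvec (cocycleProd A ω n : Matrix (Fin d) (Fin d) ℝ) v‖ := by
  induction n with
  | zero => simp [cocycleProd, mvec_one]
  | succ n ih =>
    rw [cocycleProd, Matrix.SpecialLinearGroup.coe_mul, mvec_mul]
    have h' := h (ω n) (mvec (cocycleProd A ω n : Matrix (Fin d) (Fin d) ℝ) v)
    have hCn : 0 ≤ C ^ n := by positivity
    constructor
    · calc _ ≤ C * (C ^ n * ‖v‖) := h'.1.trans (by gcongr; exact ih.1)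
        _ = C ^ (n + 1) * ‖v‖ := by ring
    · calc ‖v‖ ≤ C ^ n * _ := ih.2
        _ ≤ C ^ n * _ := mul_le_mul_of_nonneg_left h'.2 hCn
        _ = _ := by ring

end Words

section Accessibility

variable {d κ : ℕ} {A : Fin κ → Matrix.SpecialLinearGroup (Fin d) ℝ}

/-- Since the length bound in strong accessibility does not depend on the target radius, every
direction is attained exactly. -/
lemma StronglyProjectivelyAccessible.exists_mvec_eq (hacc : StronglyProjectivelyAccessible A)
    {ε : ℝ} (hε : 0 < ε) : ∃ K : ℕ, ∀ v₁ ∈ unitSphere d, ∀ v₂ ∈ unitSphere d,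
      ∃ w : List (Fin κ), w.length ≤ K ∧ ∃ x ∈ closedBall v₁ ε ∩ unitSphere d, ∃ c : ℝ,
        mvec (wordProd A w : Matrix (Fin d) (Fin d) ℝ) x = c • v₂ ∧ 0 < c := by
  obtain ⟨K, hK⟩ := hacc ε hε
  refine ⟨K, fun v₁ hv₁ v₂ hv₂ => ?_⟩
  have hsub0 : ∀ x ∈ unitSphere d, x ≠ 0 := by
    rintro x hx rfl
    simp [unitSphere] at hx
  set T : Set (EuclideanSpace ℝ (Fin d)) := ⋃ w ∈ {w : List (Fin κ) | w.length ≤ K},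
    projMap (wordProd A w : Matrix (Fin d) (Fin d) ℝ) '' (closedBall v₁ ε ∩ unitSphere d)
  have hTc : IsCompact T := by
    refine (List.finite_length_le (Fin κ) K).isCompact_biUnion fun w _ => ?_
    refine ((isCompact_closedBall v₁ ε).inter_right Metric.isClosed_sphere).image_of_continuousOn ?_
    exact ((continuous_mvec _).norm.continuousOn.inv₀ fun x hx =>
      norm_ne_zero_iff.2 (mvec_ne_zero _ (hsub0 x hx.2))).smul (continuous_mvec _).continuousOn
  have hmem : v₂ ∈ closure T := by
    rw [Metric.mem_closure_iff]
    intro δ hδ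
    obtain ⟨p, hp, w, hw, u, hu, hsub⟩ :=
      hK v₁ hv₁ v₂ hv₂ (min ε δ) (lt_min hε hδ) (min_le_left _ _)
    have hpos : 0 < min (ε / 4) (min ε δ / 2) :=
      lt_min (by positivity) (half_pos (lt_min hε hδ))
    obtain ⟨⟨x, hx, hxu⟩, hu2⟩ := hsub ⟨mem_ball_self hpos, hu⟩
    refine ⟨u, ?_, ?_⟩
    · refine Set.mem_biUnion (show w.length ≤ K by omega)
        ⟨x, ⟨ball_subset_closedBall hx.1, hx.2⟩, ?_⟩
      rw [← projWordComp_eq A w hx.2, hxu]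
    · rw [dist_comm]
      exact (mem_ball.1 hu2).trans_le (min_le_right _ _)
  rw [hTc.isClosed.closure_eq] at hmem
  obtain ⟨w, hw, x, hx, hxv⟩ := Set.mem_iUnion₂.1 hmem
  have hn := norm_pos_iff.2 (mvec_ne_zero (wordProd A w) (hsub0 x hx.2))
  refine ⟨w, hw, x, hx, _, ?_, hn⟩
  rw [← hxv, projMap, smul_smul, mul_inv_cancel₀ hn.ne', one_smul]

lemma StronglyProjectivelyAccessible.eq_top_of_invariant (hacc : StronglyProjectivelyAccessible A)
    {W : Submodule ℝ (EuclideanSpace ℝ (Fin d))}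
    (hW : ∀ i, ∀ x ∈ W, mvec (A i : Matrix (Fin d) (Fin d) ℝ) x ∈ W) (hbot : W ≠ ⊥) :
    W = ⊤ := by
  by_contra htop
  obtain ⟨y, hyW, hy0⟩ := W.ne_bot_iff.1 hbot
  obtain ⟨z, hzW, hz0⟩ := Wᗮ.ne_bot_iff.1 (fun h => htop (Submodule.orthogonal_eq_bot_iff.1 h))
  have hunit : ∀ x : EuclideanSpace ℝ (Fin d), x ≠ 0 → ‖x‖⁻¹ • x ∈ unitSphere d := fun x hx => by
    simp [unitSphere, norm_smul, hx]
  obtain ⟨K, hK⟩ := hacc.exists_mvec_eq (ε := 1 / 2) (by norm_num)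
  obtain ⟨w, -, x, ⟨hxb, hx1⟩, c, hxc, hc⟩ := hK _ (hunit z hz0) _ (hunit y hy0)
  have hinv : ∀ (u : List (Fin κ)), ∀ x ∈ W,
      mvec (wordProd A u : Matrix (Fin d) (Fin d) ℝ) x ∈ W := by
    intro u
    induction u with
    | nil => exact fun x hx => by rwa [mvec_wordProd_nil]
    | cons i u ih => exact fun x hx => by rw [mvec_wordProd_cons]; exact ih _ (hW i x hx)
  set f := Matrix.toEuclideanLin (wordProd A w : Matrix (Fin d) (Fin d) ℝ) with hf
  have hinj : Function.Injective f := fun a b hab => by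
    rw [← mvec_inv_mvec (wordProd A w) a, ← mvec_inv_mvec (wordProd A w) b]
    exact congrArg _ hab
  have hmap : W.map f = W := by
    refine Submodule.eq_of_le_of_finrank_eq (Submodule.map_le_iff_le_comap.2 (hinv w)) ?_
    exact (Submodule.equivMapOfInjective f hinj W).finrank_eq.symm
  have hxW : x ∈ W := by
    have hfx : f x ∈ W.map f := by
      rw [hmap]
      change mvec _ x ∈ W
      rw [hxc]
      exact W.smul_mem _ (W.smul_mem _ hyW)
    obtain ⟨x', hx', hxx⟩ := hfx
    exact hinj hxx ▸ hx'
  have horth : inner ℝ x (‖z‖⁻¹ • z) = 0 :=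
    W.inner_right_of_mem_orthogonal hxW (Wᗮ.smul_mem _ hzW)
  have hd2 := norm_sub_sq_real x (‖z‖⁻¹ • z)
  have hz1 := hunit z hz0
  simp only [unitSphere, mem_sphere_zero_iff_norm] at hx1 hz1
  rw [horth, hx1, hz1] at hd2
  rw [mem_closedBall, dist_eq_norm] at hxb
  nlinarith [norm_nonneg (x - ‖z‖⁻¹ • z)]

end Accessibility

section Growth

variable {d κ : ℕ} {A : Fin κ → Matrix.SpecialLinearGroup (Fin d) ℝ}

/-- A compact set of matrices that is closed under multiplication contains the inverses of its
elements of determinant one. -/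
lemma inv_mem_of_isCompact {T : Set (Matrix (Fin d) (Fin d) ℝ)} (hT : IsCompact T)
    (hone : 1 ∈ T) (hmul : ∀ B ∈ T, ∀ C ∈ T, B * C ∈ T)
    {g : Matrix.SpecialLinearGroup (Fin d) ℝ} (hg : (g : Matrix (Fin d) (Fin d) ℝ) ∈ T) :
    ((g⁻¹ : Matrix.SpecialLinearGroup (Fin d) ℝ) : Matrix (Fin d) (Fin d) ℝ) ∈ T := by
  have hpow : ∀ n : ℕ, ((g ^ n : Matrix.SpecialLinearGroup (Fin d) ℝ) :
      Matrix (Fin d) (Fin d) ℝ) ∈ T := by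
    intro n
    induction n with
    | zero => simpa using hone
    | succ n ih =>
      rw [pow_succ, Matrix.SpecialLinearGroup.coe_mul]
      exact hmul _ ih _ hg
  have : FirstCountableTopology (Matrix (Fin d) (Fin d) ℝ) :=
    inferInstanceAs (FirstCountableTopology (Fin d → Fin d → ℝ))
  obtain ⟨M, -, φ, hφ, hlim⟩ := hT.tendsto_subseq hpow
  have hdet : M.det = 1 := by
    have h1 := ((continuous_id (X := Matrix (Fin d) (Fin d) ℝ)).matrix_det.tendsto M).comp hlim
    refine tendsto_nhds_unique h1 ?_
    simp [Function.comp_def]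
  have hadj := ((continuous_id (X := Matrix (Fin d) (Fin d) ℝ)).matrix_adjugate.tendsto M).comp hlim
  have hprod := ((hlim.comp (tendsto_add_atTop_nat 1)).mul hadj).mul_const
    (g : Matrix (Fin d) (Fin d) ℝ).adjugate
  rw [id, Matrix.mul_adjugate, hdet, one_smul, one_mul] at hprod
  rw [Matrix.SpecialLinearGroup.coe_inv]
  refine hT.isClosed.mem_of_tendsto hprod (Eventually.of_forall fun k => ?_)
  have hlt : φ k + 1 ≤ φ (k + 1) := hφ k.lt_succ_self
  have heq : g ^ (φ (k + 1) - (φ k + 1)) = g ^ φ (k + 1) * (g ^ φ k)⁻¹ * g⁻¹ := by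
    rw [pow_sub _ hlt, pow_succ']
    group
  have h := hpow (φ (k + 1) - (φ k + 1))
  rw [heq, Matrix.SpecialLinearGroup.coe_mul, Matrix.SpecialLinearGroup.coe_mul,
    Matrix.SpecialLinearGroup.coe_inv, Matrix.SpecialLinearGroup.coe_inv] at h
  exact h

lemma isCompact_closure_of_wordProd_bounded {C : ℝ}
    (hC : ∀ w i j, |(wordProd A w : Matrix (Fin d) (Fin d) ℝ) i j| ≤ C) :
    IsCompact (closure
      (((↑) : Matrix.SpecialLinearGroup (Fin d) ℝ → Matrix (Fin d) (Fin d) ℝ) ''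
        ((Subgroup.closure (Set.range A) : Subgroup (Matrix.SpecialLinearGroup (Fin d) ℝ)) :
          Set (Matrix.SpecialLinearGroup (Fin d) ℝ)))) := by
  set S : Set (Matrix (Fin d) (Fin d) ℝ) :=
    Set.range fun w => (wordProd A w : Matrix (Fin d) (Fin d) ℝ)
  have hbox : IsCompact (Set.univ.pi fun _ : Fin d => Set.univ.pi fun _ : Fin d =>
      Set.Icc (-C) C) :=
    isCompact_univ_pi fun _ => isCompact_univ_pi fun _ => isCompact_Icc
  have hT : IsCompact (closure S) := by
    refine hbox.closure_of_subset ?_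
    rintro _ ⟨w, rfl⟩ i _ j _
    exact abs_le.1 (hC w i j)
  have hone : (1 : Matrix (Fin d) (Fin d) ℝ) ∈ closure S :=
    subset_closure ⟨[], by simp [wordProd]⟩
  have hmul : ∀ B ∈ closure S, ∀ C ∈ closure S, B * C ∈ closure S := fun B hB C hC =>
    map_mem_closure₂ continuous_mul hB hC <| by
      rintro _ ⟨u, rfl⟩ _ ⟨w, rfl⟩
      exact ⟨w ++ u, by simp [wordProd_append]⟩
  suffices h : ∀ g : Matrix.SpecialLinearGroup (Fin d) ℝ, g ∈ Subgroup.closure (Set.range A) →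
      (g : Matrix (Fin d) (Fin d) ℝ) ∈ closure S from
    hT.of_isClosed_subset isClosed_closure
      (closure_minimal (Set.image_subset_iff.2 h) isClosed_closure)
  intro g hg
  induction hg using Subgroup.closure_induction with
  | mem x hx =>
    obtain ⟨i, rfl⟩ := hx
    exact subset_closure ⟨[i], by simp [wordProd]⟩
  | one => simpa using hone
  | mul x y _ _ hx hy =>
    rw [Matrix.SpecialLinearGroup.coe_mul]
    exact hmul _ hx _ hy
  | inv x _ hx => exact inv_mem_of_isCompact hT hone hmul hx

lemma StronglyProjectivelyAccessible.exists_lt_norm_mvec (hacc : StronglyProjectivelyAccessible A)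
    (hnc : ¬ IsCompact (closure
      (((↑) : Matrix.SpecialLinearGroup (Fin d) ℝ → Matrix (Fin d) (Fin d) ℝ) ''
        ((Subgroup.closure (Set.range A) : Subgroup (Matrix.SpecialLinearGroup (Fin d) ℝ)) :
          Set (Matrix.SpecialLinearGroup (Fin d) ℝ)))))
    {x : EuclideanSpace ℝ (Fin d)} (hx : x ≠ 0) (B : ℝ) :
    ∃ w, B < ‖mvec (wordProd A w : Matrix (Fin d) (Fin d) ℝ) x‖ := by
  let W : Submodule ℝ (EuclideanSpace ℝ (Fin d)) :=
    { carrier := {x | ∃ B : ℝ, ∀ w, ‖mvec (wordProd A w : Matrix (Fin d) (Fin d) ℝ) x‖ ≤ B}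
      add_mem' := by
        rintro a b ⟨Ba, ha⟩ ⟨Bb, hb⟩
        refine ⟨Ba + Bb, fun w => ?_⟩
        rw [mvec_add]
        exact (norm_add_le _ _).trans (add_le_add (ha w) (hb w))
      zero_mem' := ⟨0, fun w => by simp [mvec_zero]⟩
      smul_mem' := by
        rintro c a ⟨Ba, ha⟩
        refine ⟨‖c‖ * Ba, fun w => ?_⟩
        rw [mvec_smul, norm_smul]
        exact mul_le_mul_of_nonneg_left (ha w) (norm_nonneg c) }
  by_contra! hcon
  have hinv : ∀ i, ∀ x ∈ W, mvec (A i : Matrix (Fin d) (Fin d) ℝ) x ∈ W := by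
    rintro i x ⟨B, hB⟩
    exact ⟨B, fun w => by rw [← mvec_wordProd_cons]; exact hB _⟩
  have htop : W = ⊤ := hacc.eq_top_of_invariant hinv (W.ne_bot_iff.2 ⟨x, ⟨B, hcon⟩, hx⟩)
  have hcol : ∀ j : Fin d, ∃ B : ℝ, ∀ w,
      ‖mvec (wordProd A w : Matrix (Fin d) (Fin d) ℝ) (EuclideanSpace.single j 1)‖ ≤ B := fun j =>
    show EuclideanSpace.single j (1 : ℝ) ∈ W from htop ▸ Submodule.mem_top
  choose b hb using hcol
  refine hnc (isCompact_closure_of_wordProd_bounded (C := ∑ j, b j) fun w i j => ?_)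
  have h1 : |(wordProd A w : Matrix (Fin d) (Fin d) ℝ) i j| ≤
      ‖mvec (wordProd A w : Matrix (Fin d) (Fin d) ℝ) (EuclideanSpace.single j 1)‖ := by
    have h := PiLp.norm_apply_le
      (mvec (wordProd A w : Matrix (Fin d) (Fin d) ℝ) (EuclideanSpace.single j 1)) i
    simpa [mvec, Matrix.toLpLin_apply] using h
  refine h1.trans ((hb j w).trans ?_)
  exact Finset.single_le_sum (f := b) (fun k _ => (norm_nonneg _).trans (hb k []))
    (Finset.mem_univ j)

lemma StronglyProjectivelyAccessible.exists_uniform_expansion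
    (hacc : StronglyProjectivelyAccessible A)
    (hnc : ¬ IsCompact (closure
      (((↑) : Matrix.SpecialLinearGroup (Fin d) ℝ → Matrix (Fin d) (Fin d) ℝ) ''
        ((Subgroup.closure (Set.range A) : Subgroup (Matrix.SpecialLinearGroup (Fin d) ℝ)) :
          Set (Matrix.SpecialLinearGroup (Fin d) ℝ))))) :
    ∃ L : ℕ, 1 ≤ L ∧ ∀ x : EuclideanSpace ℝ (Fin d), x ≠ 0 → ∃ w : List (Fin κ),
      1 ≤ w.length ∧ w.length ≤ L ∧
        2 * ‖x‖ ≤ ‖mvec (wordProd A w : Matrix (Fin d) (Fin d) ℝ) x‖ := by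
  have hcompact : IsCompact (unitSphere d) := isCompact_sphere _ _
  obtain ⟨t, ht⟩ := hcompact.elim_finite_subcover
    (fun w : List (Fin κ) => {x | 2 < ‖mvec (wordProd A w : Matrix (Fin d) (Fin d) ℝ) x‖})
    (fun w => isOpen_lt continuous_const (continuous_mvec _).norm) (fun x hx => by
      have hx0 : x ≠ 0 := by
        rintro rfl
        simp [unitSphere] at hx
      exact Set.mem_iUnion.2 (hacc.exists_lt_norm_mvec hnc hx0 2))
  refine ⟨t.sup List.length + 1, by omega, fun x hx => ?_⟩
  have hn : 0 < ‖x‖ := norm_pos_iff.2 hx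
  have hmem : ‖x‖⁻¹ • x ∈ unitSphere d := by simp [unitSphere, norm_smul, hx]
  obtain ⟨w, hwt, hw⟩ := Set.mem_iUnion₂.1 (ht hmem)
  have hle : w.length ≤ t.sup List.length := Finset.le_sup (f := List.length) hwt
  have hgrow : 2 * ‖x‖ ≤ ‖mvec (wordProd A w : Matrix (Fin d) (Fin d) ℝ) x‖ := by
    have hw' : 2 < ‖x‖⁻¹ * ‖mvec (wordProd A w : Matrix (Fin d) (Fin d) ℝ) x‖ := by
      simpa [mvec_smul, norm_smul] using hw
    rw [inv_mul_eq_div, lt_div_iff₀ hn] at hw'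
    exact hw'.le
  refine ⟨w, ?_, by omega, hgrow⟩
  cases w with
  | nil =>
    rw [mvec_wordProd_nil] at hgrow
    linarith
  | cons i w => simp

lemma exists_iterated_expansion {L : ℕ}
    (hL : ∀ x : EuclideanSpace ℝ (Fin d), x ≠ 0 → ∃ w : List (Fin κ),
      1 ≤ w.length ∧ w.length ≤ L ∧
        2 * ‖x‖ ≤ ‖mvec (wordProd A w : Matrix (Fin d) (Fin d) ℝ) x‖)
    {x : EuclideanSpace ℝ (Fin d)} (hx : x ≠ 0) (k : ℕ) :
    ∃ w : List (Fin κ), k ≤ w.length ∧ w.length ≤ L * k ∧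
      2 ^ k * ‖x‖ ≤ ‖mvec (wordProd A w : Matrix (Fin d) (Fin d) ℝ) x‖ := by
  induction k with
  | zero => exact ⟨[], by simp, by simp, by simp [mvec_wordProd_nil]⟩
  | succ k ih =>
    obtain ⟨w, h1, h2, h3⟩ := ih
    obtain ⟨u, g1, g2, g3⟩ := hL _ (mvec_ne_zero (wordProd A w) hx)
    refine ⟨w ++ u, ?_, ?_, ?_⟩
    · rw [List.length_append]
      omega
    · rw [List.length_append, Nat.mul_succ]
      omega
    · rw [mvec_wordProd_append, pow_succ]
      linarith

end Growth

section Genericity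

variable {d κ : ℕ} (A : Fin κ → Matrix.SpecialLinearGroup (Fin d) ℝ)

/-- The category analogue of Fubini's theorem: the generic sections of countably many dense open
subsets of a product are dense. -/
lemma residual_forall_dense_section {X Y : Type*} [TopologicalSpace X] [TopologicalSpace Y]
    [SecondCountableTopology X] {U : ℕ → Set (X × Y)} (ho : ∀ n, IsOpen (U n))
    (hd : ∀ n, Dense (U n)) : {y | ∀ n, Dense {x | (x, y) ∈ U n}} ∈ residual Y := by
  have hbasis := TopologicalSpace.isBasis_countableBasis X
  have hV : ∀ n, ∀ B ∈ TopologicalSpace.countableBasis X,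
      {y | ∃ x ∈ B, (x, y) ∈ U n} ∈ residual Y := by
    intro n B hB
    have heq : {y | ∃ x ∈ B, (x, y) ∈ U n} = Prod.snd '' (B ×ˢ Set.univ ∩ U n) := by
      ext y
      simp
    refine residual_of_dense_open ?_ ?_
    · rw [heq]
      exact isOpenMap_snd _ (((hbasis.isOpen hB).prod isOpen_univ).inter (ho n))
    · rw [dense_iff_inter_open]
      rintro O hO ⟨y, hy⟩
      obtain ⟨x, hx⟩ := TopologicalSpace.nonempty_of_mem_countableBasis hB
      obtain ⟨⟨a, b⟩, ⟨ha, hb⟩, hab⟩ := (hd n).inter_open_nonempty (B ×ˢ O)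
        ((hbasis.isOpen hB).prod hO) ⟨(x, y), hx, hy⟩
      exact ⟨b, hb, a, ha, hab⟩
  have hall : ∀ᶠ y in residual Y, ∀ n, ∀ B ∈ TopologicalSpace.countableBasis X,
      ∃ x ∈ B, (x, y) ∈ U n :=
    eventually_countable_forall.2 fun n =>
      (eventually_countable_ball (TopologicalSpace.countable_countableBasis X)).2 (hV n)
  filter_upwards [hall] with y hy n
  rw [hbasis.dense_iff]
  intro B hB _
  exact hy n B hB

lemma exists_cylinder_subset {O : Set (ℤ → Fin κ)} (hO : IsOpen O) {ω : ℤ → Fin κ} (hω : ω ∈ O) :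
    ∃ m : ℕ, ∀ ω' : ℤ → Fin κ, (∀ i : ℤ, i < m → ω' i = ω i) → ω' ∈ O := by
  obtain ⟨I, u, hu, hsub⟩ := isOpen_pi_iff.1 hO ω hω
  refine ⟨I.sup Int.natAbs + 1, fun ω' h => hsub fun i hi => ?_⟩
  have hle : i.natAbs ≤ I.sup Int.natAbs := Finset.le_sup (f := Int.natAbs) hi
  rw [h i (by push_cast; omega)]
  exact (hu i hi).2

lemma continuous_mvec_cocycleProd (n : ℕ) :
    Continuous fun p : (ℤ → Fin κ) × EuclideanSpace ℝ (Fin d) =>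
      mvec (cocycleProd A p.1 n : Matrix (Fin d) (Fin d) ℝ) p.2 := by
  induction n with
  | zero => simpa [cocycleProd, mvec_one] using continuous_snd
  | succ n ih =>
    have hF : Continuous fun q : Fin κ × EuclideanSpace ℝ (Fin d) =>
        mvec (A q.1 : Matrix (Fin d) (Fin d) ℝ) q.2 := by
      rw [continuous_prod_of_discrete_left]
      exact fun i => continuous_mvec (A i : Matrix (Fin d) (Fin d) ℝ)
    have hc := hF.comp (((continuous_apply (n : ℤ)).comp continuous_fst).prodMk ih)
    refine hc.congr fun p => ?_
    simp [cocycleProd, mvec_mul]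

/-- The pairs `(ω, v)` for which `‖A⁽ⁿ⁾(ω) v‖ < exp (χ n)` for some `n ≥ N`. -/
def slowGrowth (χ : ℝ) (N : ℕ) : Set ((ℤ → Fin κ) × EuclideanSpace ℝ (Fin d)) :=
  {p | ∃ n ≥ N, ‖mvec (cocycleProd A p.1 n : Matrix (Fin d) (Fin d) ℝ) p.2‖ < Real.exp (χ * n)}

/-- The pairs `(ω, v)` for which `exp (χ n) < ‖A⁽ⁿ⁾(ω) v‖` for some `n ≥ N`. -/
def fastGrowth (χ : ℝ) (N : ℕ) : Set ((ℤ → Fin κ) × EuclideanSpace ℝ (Fin d)) :=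
  {p | ∃ n ≥ N, Real.exp (χ * n) < ‖mvec (cocycleProd A p.1 n : Matrix (Fin d) (Fin d) ℝ) p.2‖}

lemma isOpen_slowGrowth (χ : ℝ) (N : ℕ) : IsOpen (slowGrowth A χ N) := by
  have heq : slowGrowth A χ N = ⋃ n ≥ N,
      {p | ‖mvec (cocycleProd A p.1 n : Matrix (Fin d) (Fin d) ℝ) p.2‖ < Real.exp (χ * n)} := by
    ext p
    simp [slowGrowth]
  rw [heq]
  exact isOpen_biUnion fun n _ =>
    isOpen_lt (continuous_mvec_cocycleProd A n).norm continuous_const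

lemma isOpen_fastGrowth (χ : ℝ) (N : ℕ) : IsOpen (fastGrowth A χ N) := by
  have heq : fastGrowth A χ N = ⋃ n ≥ N,
      {p | Real.exp (χ * n) < ‖mvec (cocycleProd A p.1 n : Matrix (Fin d) (Fin d) ℝ) p.2‖} := by
    ext p
    simp [fastGrowth]
  rw [heq]
  exact isOpen_biUnion fun n _ =>
    isOpen_lt continuous_const (continuous_mvec_cocycleProd A n).norm

variable {A}

lemma dense_fastGrowth_section {L : ℕ} (hL1 : 1 ≤ L)
    (hL : ∀ x : EuclideanSpace ℝ (Fin d), x ≠ 0 → ∃ w : List (Fin κ),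
      1 ≤ w.length ∧ w.length ≤ L ∧
        2 * ‖x‖ ≤ ‖mvec (wordProd A w : Matrix (Fin d) (Fin d) ℝ) x‖)
    {v : EuclideanSpace ℝ (Fin d)} (hv : v ≠ 0) (N : ℕ) :
    Dense {ω | (ω, v) ∈ fastGrowth A (Real.log 2 / (2 * L)) N} := by
  rw [dense_iff_inter_open]
  rintro O hO ⟨ω, hω⟩
  obtain ⟨m, hm⟩ := exists_cylinder_subset hO hω
  set y := mvec (cocycleProd A ω m : Matrix (Fin d) (Fin d) ℝ) v with hy
  have hy0 : y ≠ 0 := mvec_ne_zero _ hv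
  have hynorm : 0 < ‖y‖ := norm_pos_iff.2 hy0
  have hlog2 : 0 < Real.log 2 := Real.log_pos (by norm_num)
  have hLpos : (0 : ℝ) < L := by exact_mod_cast hL1
  set χ := Real.log 2 / (2 * L) with hχ
  have hχpos : 0 < χ := by positivity
  have hχL : χ * L = Real.log 2 / 2 := by
    rw [hχ]
    field_simp
  obtain ⟨k₀, hk₀⟩ := exists_nat_gt ((χ * m - Real.log ‖y‖) / (Real.log 2 / 2))
  rw [div_lt_iff₀ (by positivity)] at hk₀
  set k := max k₀ N with hk
  obtain ⟨w, hw1, hw2, hw3⟩ := exists_iterated_expansion hL hy0 k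
  obtain ⟨ω', h1, h2⟩ := exists_extension A w ω m
  refine ⟨ω', hm ω' h1, m + w.length, ?_, ?_⟩
  · have : N ≤ k := le_max_right _ _
    omega
  · rw [h2, Matrix.SpecialLinearGroup.coe_mul, mvec_mul]
    refine lt_of_lt_of_le ?_ hw3
    rw [← Real.lt_log_iff_exp_lt (by positivity), Real.log_mul (by positivity) hynorm.ne',
      Real.log_pow]
    have hk' : (k₀ : ℝ) ≤ k := by exact_mod_cast le_max_left k₀ N
    have hlen : (w.length : ℝ) ≤ L * k := by exact_mod_cast hw2
    have h3 : χ * w.length ≤ Real.log 2 / 2 * k := by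
      calc χ * w.length ≤ χ * (L * k) := by gcongr
        _ = Real.log 2 / 2 * k := by rw [← mul_assoc, hχL]
    have h4 : (k₀ : ℝ) * (Real.log 2 / 2) ≤ k * (Real.log 2 / 2) := by gcongr
    push_cast
    linarith

lemma StronglyProjectivelyAccessible.dense_slowGrowth (hacc : StronglyProjectivelyAccessible A)
    (hd : 2 ≤ d) (hκ : 1 ≤ κ) {χ : ℝ} (hχ : 0 < χ) (N : ℕ) : Dense (slowGrowth A χ N) := by
  have : Nontrivial (EuclideanSpace ℝ (Fin d)) := by
    have : Nonempty (Fin d) := ⟨⟨0, by omega⟩⟩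
    infer_instance
  obtain ⟨C, hC1, hC⟩ := exists_norm_bound A
  rw [dense_iff_inter_open]
  rintro O hO ⟨⟨ω, v₀⟩, hω⟩
  obtain ⟨O₁, O₂, hO₁, hO₂, hω₁, hv₀, hsub⟩ := isOpen_prod_iff.1 hO ω v₀ hω
  obtain ⟨v, hv, hv0 : v ≠ 0⟩ :=
    (dense_compl_singleton (0 : EuclideanSpace ℝ (Fin d))).inter_open_nonempty O₂ hO₂ ⟨v₀, hv₀⟩
  obtain ⟨m, hm⟩ := exists_cylinder_subset hO₁ hω₁
  set g := cocycleProd A ω m with hg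
  set y := mvec (g : Matrix (Fin d) (Fin d) ℝ) v with hy
  have hy0 : y ≠ 0 := mvec_ne_zero _ hv0
  have hynorm : 0 < ‖y‖ := norm_pos_iff.2 hy0
  set f : EuclideanSpace ℝ (Fin d) → EuclideanSpace ℝ (Fin d) := fun x =>
    ‖y‖ • mvec ((g⁻¹ : Matrix.SpecialLinearGroup (Fin d) ℝ) : Matrix (Fin d) (Fin d) ℝ) x with hf
  have hfcont : Continuous f := by
    have h := continuous_mvec
      ((g⁻¹ : Matrix.SpecialLinearGroup (Fin d) ℝ) : Matrix (Fin d) (Fin d) ℝ)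
    fun_prop
  have hfy : f (‖y‖⁻¹ • y) = v := by
    rw [hf]
    simp only
    rw [mvec_smul, hy, mvec_inv_mvec, smul_smul, mul_inv_cancel₀ hynorm.ne', one_smul]
  obtain ⟨ε, hε, hεsub⟩ := Metric.nhds_basis_closedBall.mem_iff.1
    ((hO₂.preimage hfcont).mem_nhds (show f (‖y‖⁻¹ • y) ∈ O₂ by rwa [hfy]))
  obtain ⟨K, hK⟩ := hacc.exists_mvec_eq hε
  obtain ⟨n₀, hn₀⟩ := exists_nat_gt (Real.log (‖y‖ * C ^ K) / χ)
  rw [div_lt_iff₀ hχ] at hn₀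
  set n := max n₀ N with hn
  set u : List (Fin κ) := List.replicate n ⟨0, hκ⟩ with hu
  obtain ⟨v₂, hv₂, hv₂le⟩ := exists_unit_norm_mvec_le hd (wordProd A u).det_coe
  obtain ⟨w, hwK, x, ⟨hxb, hx1⟩, c, hxc, hc⟩ :=
    hK (‖y‖⁻¹ • y) (by simp [unitSphere, norm_smul, hy0]) v₂ hv₂
  obtain ⟨ω', h1, h2⟩ := exists_extension A (w ++ u) ω m
  refine ⟨(ω', f x), hsub ⟨hm ω' h1, hεsub hxb⟩, m + (w ++ u).length, ?_, ?_⟩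
  · simp only [List.length_append, hu, List.length_replicate]
    have : N ≤ n := le_max_right _ _
    omega
  · have hxnorm : ‖x‖ = 1 := by simpa [unitSphere] using hx1
    have hv₂norm : ‖v₂‖ = 1 := by simpa [unitSphere] using hv₂
    have hcle : c ≤ C ^ K := by
      have h := norm_mvec_wordProd_le A hC1 (fun i x => (hC i x).1) w x
      rw [hxc, norm_smul, hv₂norm, hxnorm, Real.norm_of_nonneg hc.le, mul_one, mul_one] at h
      exact h.trans (pow_le_pow_right₀ hC1 hwK)
    have heq : mvec (cocycleProd A ω' (m + (w ++ u).length) : Matrix (Fin d) (Fin d) ℝ) (f x) =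
        (‖y‖ * c) • mvec (wordProd A u : Matrix (Fin d) (Fin d) ℝ) v₂ := by
      rw [h2, Matrix.SpecialLinearGroup.coe_mul, mvec_mul, hf]
      simp only
      rw [mvec_smul, mvec_mvec_inv, mvec_smul, mvec_wordProd_append, hxc, mvec_smul, smul_smul]
    have hle : ‖mvec (cocycleProd A ω' (m + (w ++ u).length) : Matrix (Fin d) (Fin d) ℝ) (f x)‖ ≤
        ‖y‖ * C ^ K := by
      rw [heq, norm_smul, Real.norm_of_nonneg (by positivity)]
      calc ‖y‖ * c * _ ≤ ‖y‖ * c * 1 := by gcongr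
        _ ≤ ‖y‖ * C ^ K := by rw [mul_one]; gcongr
    refine hle.trans_lt ?_
    rw [← Real.log_lt_iff_lt_exp (by positivity)]
    refine hn₀.trans_le ?_
    rw [mul_comm]
    gcongr
    simp only [List.length_append, hu, List.length_replicate]
    have : n₀ ≤ n := le_max_left _ _
    omega

end Genericity

section Exponents

variable {d κ : ℕ} {A : Fin κ → Matrix.SpecialLinearGroup (Fin d) ℝ}

lemma exists_abs_growthRate_le (ω : ℤ → Fin κ) {v : EuclideanSpace ℝ (Fin d)} (hv : v ≠ 0) :
    ∃ b : ℝ, ∀ n : ℕ,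
      |(n : ℝ)⁻¹ * Real.log ‖mvec (cocycleProd A ω n : Matrix (Fin d) (Fin d) ℝ) v‖| ≤ b := by
  obtain ⟨C, hC1, hC⟩ := exists_norm_bound A
  refine ⟨Real.log C + |Real.log ‖v‖|, fun n => ?_⟩
  have hlogC : 0 ≤ Real.log C := Real.log_nonneg hC1
  rcases Nat.eq_zero_or_pos n with rfl | hn
  · simpa using by positivity
  have hC0 : 0 < C := by linarith
  obtain ⟨h1, h2⟩ := norm_mvec_cocycleProd_bounds A hC1 hC ω v n
  have hv' : 0 < ‖v‖ := norm_pos_iff.2 hv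
  have hw : 0 < ‖mvec (cocycleProd A ω n : Matrix (Fin d) (Fin d) ℝ) v‖ :=
    norm_pos_iff.2 (mvec_ne_zero _ hv)
  have g1 := Real.log_le_log hw h1
  have g2 := Real.log_le_log hv' h2
  rw [Real.log_mul (by positivity) hv'.ne', Real.log_pow] at g1
  rw [Real.log_mul (by positivity) hw.ne', Real.log_pow] at g2
  have hn1 : (1 : ℝ) ≤ n := by exact_mod_cast hn
  rw [abs_mul, abs_inv, Nat.abs_cast, inv_mul_le_iff₀ (by positivity), abs_le]
  have h3 : |Real.log ‖v‖| ≤ n * |Real.log ‖v‖| := le_mul_of_one_le_left (abs_nonneg _) hn1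
  constructor
  · linarith [neg_abs_le (Real.log ‖v‖)]
  · linarith [le_abs_self (Real.log ‖v‖)]

lemma liminf_lt_limsup_of_growth {ω : ℤ → Fin κ} {v : EuclideanSpace ℝ (Fin d)} (hv : v ≠ 0)
    {χ₁ χ₂ : ℝ} (hχ : χ₁ < χ₂) (hslow : ∀ N, (ω, v) ∈ slowGrowth A χ₁ N)
    (hfast : ∀ N, (ω, v) ∈ fastGrowth A χ₂ N) :
    liminf (fun n : ℕ =>
        (n : ℝ)⁻¹ * Real.log ‖mvec (cocycleProd A ω n : Matrix (Fin d) (Fin d) ℝ) v‖) atTop <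
      limsup (fun n : ℕ =>
        (n : ℝ)⁻¹ * Real.log ‖mvec (cocycleProd A ω n : Matrix (Fin d) (Fin d) ℝ) v‖) atTop := by
  obtain ⟨b, hb⟩ := exists_abs_growthRate_le (A := A) ω hv
  have hpos : ∀ n, 0 < ‖mvec (cocycleProd A ω n : Matrix (Fin d) (Fin d) ℝ) v‖ := fun n =>
    norm_pos_iff.2 (mvec_ne_zero _ hv)
  have hle : liminf (fun n : ℕ =>
      (n : ℝ)⁻¹ * Real.log ‖mvec (cocycleProd A ω n : Matrix (Fin d) (Fin d) ℝ) v‖) atTop ≤ χ₁ := by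
    refine liminf_le_of_frequently_le (frequently_atTop.2 fun N => ?_)
      (isBoundedUnder_of ⟨-b, fun n => (abs_le.1 (hb n)).1⟩)
    obtain ⟨n, hn, h⟩ := hslow (N + 1)
    have hn0 : (0 : ℝ) < n := by exact_mod_cast (by omega : 0 < n)
    refine ⟨n, by omega, ?_⟩
    rw [inv_mul_le_iff₀ hn0, mul_comm]
    exact ((Real.log_lt_iff_lt_exp (hpos n)).2 h).le
  have hge : χ₂ ≤ limsup (fun n : ℕ =>
      (n : ℝ)⁻¹ * Real.log ‖mvec (cocycleProd A ω n : Matrix (Fin d) (Fin d) ℝ) v‖) atTop := by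
    refine le_limsup_of_frequently_le (frequently_atTop.2 fun N => ?_)
      (isBoundedUnder_of ⟨b, fun n => (abs_le.1 (hb n)).2⟩)
    obtain ⟨n, hn, h⟩ := hfast (N + 1)
    have hn0 : (0 : ℝ) < n := by exact_mod_cast (by omega : 0 < n)
    refine ⟨n, by omega, ?_⟩
    rw [le_inv_mul_iff₀ hn0, mul_comm]
    exact ((Real.lt_log_iff_exp_lt (hpos n)).2 h).le
  exact hle.trans_lt (hχ.trans_le hge)

end Exponents

/-- **Lyapunov non-typical behaviour: residual set of sequences and dense set of directions.**
If the subgroup of `SL(d,ℝ)` generated by `A₁, …, A_κ` has non-compact closure and the family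
is strongly projectively accessible, then there exist a residual subset `𝓡` of the shift
space `Σ_κ = {1,…,κ}^ℤ` and a dense subset `𝓓` of `ℝ^d ∖ {0}` such that for every `ω ∈ 𝓡`
and every `v ∈ 𝓓` the exponential growth rate of `‖A⁽ⁿ⁾(ω) v‖` does not exist. -/
theorem lyapunov_irregular_residual_dense (d κ : ℕ) (hd : 2 ≤ d) (hκ : 1 ≤ κ)
    (A : Fin κ → Matrix.SpecialLinearGroup (Fin d) ℝ)
    (hnc : ¬ IsCompact (closure
      (((↑) : Matrix.SpecialLinearGroup (Fin d) ℝ → Matrix (Fin d) (Fin d) ℝ) ''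
        ((Subgroup.closure (Set.range A) : Subgroup (Matrix.SpecialLinearGroup (Fin d) ℝ)) :
          Set (Matrix.SpecialLinearGroup (Fin d) ℝ)))))
    (hacc : StronglyProjectivelyAccessible A) :
    ∃ R : Set (ℤ → Fin κ), R ∈ residual (ℤ → Fin κ) ∧
      ∃ D : Set (EuclideanSpace ℝ (Fin d)),
        D ⊆ {v : EuclideanSpace ℝ (Fin d) | v ≠ 0} ∧ Dense D ∧
        ∀ ω ∈ R, ∀ v ∈ D,
          liminf (fun n : ℕ =>
              (n : ℝ)⁻¹ * Real.log ‖mvec (cocycleProd A ω n : Matrix (Fin d) (Fin d) ℝ) v‖)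
            atTop <
          limsup (fun n : ℕ =>
              (n : ℝ)⁻¹ * Real.log ‖mvec (cocycleProd A ω n : Matrix (Fin d) (Fin d) ℝ) v‖)
            atTop := by
  have : Nontrivial (EuclideanSpace ℝ (Fin d)) := by
    have : Nonempty (Fin d) := ⟨⟨0, by omega⟩⟩
    infer_instance
  obtain ⟨L, hL1, hL⟩ := hacc.exists_uniform_expansion hnc
  set χ : ℝ := Real.log 2 / (2 * L) with hχ
  have hχpos : 0 < χ := by
    have h2 : 0 < Real.log 2 := Real.log_pos (by norm_num)
    have hL0 : (0 : ℝ) < L := by exact_mod_cast hL1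
    positivity
  have hgeneric : {v : EuclideanSpace ℝ (Fin d) |
      (∀ N, Dense {ω | (ω, v) ∈ slowGrowth A (χ / 2) N}) ∧ v ≠ 0} ∈
        residual (EuclideanSpace ℝ (Fin d)) :=
    inter_mem
      (residual_forall_dense_section (fun N => isOpen_slowGrowth A (χ / 2) N)
        (fun N => hacc.dense_slowGrowth hd hκ (half_pos hχpos) N))
      (residual_of_dense_open isOpen_compl_singleton (dense_compl_singleton 0))
  obtain ⟨D, hDsub, hDc, hDd⟩ := (dense_of_mem_residual hgeneric).exists_countable_dense_subset
  have hsection : ∀ v : EuclideanSpace ℝ (Fin d), Continuous fun ω : ℤ → Fin κ => (ω, v) :=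
    fun v => by fun_prop
  have hres : ∀ᶠ ω in residual (ℤ → Fin κ), ∀ v ∈ D, ∀ N,
      (ω, v) ∈ slowGrowth A (χ / 2) N ∧ (ω, v) ∈ fastGrowth A χ N := by
    refine (eventually_countable_ball hDc).2 fun v hv => eventually_countable_forall.2 fun N => ?_
    exact inter_mem
      (residual_of_dense_open ((isOpen_slowGrowth A _ N).preimage (hsection v)) ((hDsub hv).1 N))
      (residual_of_dense_open ((isOpen_fastGrowth A _ N).preimage (hsection v))
        (dense_fastGrowth_section hL1 hL (hDsub hv).2 N))
  refine ⟨_, hres, D, fun v hv => (hDsub hv).2, hDd, fun ω hω v hv => ?_⟩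
  exact liminf_lt_limsup_of_growth (hDsub hv).2 (half_lt_self hχpos) (fun N => (hω v hv N).1)
    (fun N => (hω v hv N).2)

end
end

section
/- Let (X,d) be a compact metric space, κ ≥ 1, and let f₁,…,f_κ : X → X be bijections such that every f_i and every f_i⁻¹ is Lipschitz continuous. Let ψ : X → ℝ be continuous. Assume: (a) the semigroup action generated by f₁,…,f_κ has frequent hitting times; (b) there exists 1 ≤ i ≤ κ such that ψ is not a coboundary with respect to f_i. Let Σ̂_κ := {1,…,κ}^ℤ with the product topology and let F : Σ̂_κ × X → Σ̂_κ × X be the skew product F(ω,x) = (σ(ω), f_{ω₀}(x)), where σ is the left shift. Then the set I_F(φ_ψ) = {(ω,x) ∈ Σ̂_κ × X : the sequence ((1/n) ∑_{j=0}^{n−1} ψ(f_ω^j(x)))_{n≥1} does not converge} is a residual subset of Σ̂_κ × X. -/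
open Filter Topology Metric MeasureTheory

noncomputable section

/-- Composition `f_{ω_{p-1}} ∘ ⋯ ∘ f_{ω₀}` along a finite word `w = (ω₀, …, ω_{p-1})`. -/
def wordComp {X : Type*} {κ : ℕ} (f : Fin κ → X → X) (w : List (Fin κ)) (x : X) : X :=
  w.foldl (fun y i => f i y) x

/-- Composition `f_ω^n = f_{ω_{n-1}} ∘ ⋯ ∘ f_{ω₀}` along an infinite word `ω ∈ {1,…,κ}^ℕ`. -/
def seqComp {X : Type*} {κ : ℕ} (f : Fin κ → X → X) (ω : ℕ → Fin κ) : ℕ → X → X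
  | 0 => id
  | n + 1 => f (ω n) ∘ seqComp f ω n

/-- The semigroup action generated by `f₁, …, f_κ` has *frequent hitting times*:
for every `ε > 0` there is `K(ε)` such that for all `x₁, x₂ ∈ X` and every radius
`0 < r ≤ ε/2` there are `p ≤ K(ε)`, a word `w` of length `p` and a point `z` with
`B(z, r/2) ⊆ f_w^p(B(x₁,ε)) ∩ B(x₂,r)`. -/
def FrequentHittingTimes {X : Type*} [MetricSpace X] {κ : ℕ} (f : Fin κ → X → X) : Prop :=
  ∀ ε : ℝ, 0 < ε → ∃ K : ℕ, ∀ x₁ x₂ : X, ∀ r : ℝ, 0 < r → r ≤ ε / 2 →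
    ∃ p ≤ K, ∃ w : List (Fin κ), w.length = p ∧ ∃ z : X,
      Metric.ball z (r / 2) ⊆ wordComp f w '' Metric.ball x₁ ε ∩ Metric.ball x₂ r

/-- `ψ` is not a coboundary with respect to `f`: there are two `f`-invariant Borel
probability measures giving `ψ` different space averages. -/
def NotCoboundary {X : Type*} [MeasurableSpace X] (f : X → X) (ψ : X → ℝ) : Prop :=
  ∃ μ₁ μ₂ : Measure X, IsProbabilityMeasure μ₁ ∧ IsProbabilityMeasure μ₂ ∧
    μ₁.map f = μ₁ ∧ μ₂.map f = μ₂ ∧ ∫ x, ψ x ∂μ₁ < ∫ x, ψ x ∂μ₂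


/-- The left shift on the two-sided sequence space `Σ̂_κ = {1,…,κ}^ℤ`. -/
def shiftZ {κ : ℕ} (ω : ℤ → Fin κ) : ℤ → Fin κ := fun n => ω (n + 1)

/-- The skew product `F(ω,x) = (σ(ω), f_{ω₀}(x))` over the two-sided shift. -/
def skewProd {X : Type*} {κ : ℕ} (f : Fin κ → X → X) :
    ((ℤ → Fin κ) × X) → ((ℤ → Fin κ) × X) :=
  fun p => (shiftZ p.1, f (p.1 0) p.2)

section Composition

variable {X : Type*} {κ : ℕ}

theorem seqComp_add (f : Fin κ → X → X) (ω : ℕ → Fin κ) (m j : ℕ) (x : X) :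
    seqComp f ω (m + j) x = seqComp f (fun k => ω (m + k)) j (seqComp f ω m x) := by
  induction j with
  | zero => rfl
  | succ j ih => exact congrArg (f (ω (m + j))) ih

theorem seqComp_congr (f : Fin κ → X → X) {ω ω' : ℕ → Fin κ} {n : ℕ}
    (h : ∀ k < n, ω k = ω' k) : seqComp f ω n = seqComp f ω' n := by
  induction n with
  | zero => rfl
  | succ n ih => rw [seqComp, seqComp, h n (by omega), ih fun k hk => h k (by omega)]

theorem seqComp_const (f : Fin κ → X → X) (i : Fin κ) (n : ℕ) (x : X) :
    seqComp f (fun _ => i) n x = (f i)^[n] x := by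
  induction n with
  | zero => rfl
  | succ n ih => rw [seqComp, Function.comp_apply, ih, Function.iterate_succ_apply']

theorem wordComp_eq_seqComp (f : Fin κ → X → X) (w : List (Fin κ)) (i : Fin κ) (x : X) :
    wordComp f w x = seqComp f (fun k => w.getD k i) w.length x := by
  induction w generalizing x with
  | nil => rfl
  | cons a w ih =>
    rw [List.length_cons, add_comm, seqComp_add]
    have h : wordComp f (a :: w) x = wordComp f w (f a x) := rfl
    rw [h, ih]
    simp [seqComp, add_comm 1]

theorem seqComp_isOpenMap [TopologicalSpace X] {f : Fin κ → X → X}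
    (hf : ∀ i, IsOpenMap (f i)) (ω : ℕ → Fin κ) (n : ℕ) : IsOpenMap (seqComp f ω n) := by
  induction n with
  | zero => exact IsOpenMap.id
  | succ n ih => exact (hf _).comp ih

theorem continuous_seqComp [TopologicalSpace X] {f : Fin κ → X → X}
    (hf : ∀ i, Continuous (f i)) (n : ℕ) :
    Continuous fun p : (ℤ → Fin κ) × X => seqComp f (fun m : ℕ => p.1 (m : ℤ)) n p.2 := by
  induction n with
  | zero => exact continuous_snd
  | succ n ih =>
    have hu : Continuous fun q : Fin κ × X => f q.1 q.2 :=
      continuous_prod_of_discrete_left.2 hf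
    exact hu.comp (((continuous_apply (n : ℤ)).comp continuous_fst).prodMk ih)

end Composition

/-- A continuous observable has orbit segments of every length along which its Birkhoff sum is at
least the one predicted by a given invariant probability measure. -/
theorem exists_mul_integral_le_birkhoffSum {X : Type*} [TopologicalSpace X] [CompactSpace X]
    [MeasurableSpace X] [BorelSpace X] {g : X → X} (hg : Continuous g) {ψ : X → ℝ}
    (hψ : Continuous ψ) (μ : Measure X) [IsProbabilityMeasure μ] (hμ : μ.map g = μ) (n : ℕ) :
    ∃ x, n * ∫ y, ψ y ∂μ ≤ birkhoffSum g ψ n x := by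
  have hpres : ∀ j, MeasurePreserving g^[j] μ μ :=
    fun j => MeasurePreserving.iterate ⟨hg.measurable, hμ⟩ j
  have hint : ∀ j, Integrable (fun x => ψ (g^[j] x)) μ := fun j =>
    (hψ.comp (hg.iterate j)).integrable_of_hasCompactSupport (HasCompactSupport.of_compactSpace _)
  have hsum : Integrable (birkhoffSum g ψ n) μ := integrable_finsetSum _ fun j _ => hint j
  obtain ⟨x, hx⟩ := exists_integral_le hsum
  refine ⟨x, le_of_eq_of_le ?_ hx⟩
  have hj : ∀ j, ∫ x, ψ (g^[j] x) ∂μ = ∫ y, ψ y ∂μ := fun j => by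
    conv_rhs => rw [← (hpres j).map_eq]
    exact (integral_map (hpres j).aemeasurable hψ.aestronglyMeasurable).symm
  simp only [birkhoffSum]
  rw [integral_finsetSum _ fun j _ => hint j]
  simp [hj]

section Genericity

variable {X : Type*} [MetricSpace X] {κ : ℕ} {f : Fin κ → X → X} {ψ : X → ℝ}

/-- Any finite amount of symbolic data and any open set of points can be followed by an arbitrarily
long orbit segment of a single generator, starting as close as desired to any given point; the
number of intermediate steps is bounded independently of the target. -/
theorem FrequentHittingTimes.exists_shadow (hfht : FrequentHittingTimes f)
    (hopen : ∀ i, IsOpenMap (f i)) (i : Fin κ) {U : Set ((ℤ → Fin κ) × X)} (hU : IsOpen U)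
    (hne : U.Nonempty) :
    ∃ M : ℕ, ∀ y : X, ∀ V ∈ 𝓝 y, ∃ q ≤ M, ∃ p ∈ U, ∃ z ∈ V, ∀ j,
      seqComp f (fun m : ℕ => p.1 (m : ℤ)) (q + j) p.2 = (f i)^[j] z := by
  obtain ⟨⟨ω, x⟩, hp⟩ := hne
  obtain ⟨A, B, hA, hB, hωA, hxB, hAB⟩ := isOpen_prod_iff.1 hU ω x hp
  obtain ⟨I, u, hu, hIA⟩ := isOpen_pi_iff.1 hA ω hωA
  obtain ⟨m, hm⟩ : ∃ m : ℕ, ∀ k ∈ I, k < (m : ℤ) := by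
    obtain ⟨b, hb⟩ := I.bddAbove
    exact ⟨b.toNat + 1, fun k hk => by have := hb hk; omega⟩
  set g := seqComp f (fun k : ℕ => ω (k : ℤ)) m
  obtain ⟨ε, hε, hball⟩ := Metric.isOpen_iff.1 (seqComp_isOpenMap hopen _ m B hB) (g x)
    ⟨x, hxB, rfl⟩
  obtain ⟨K, hK⟩ := hfht ε hε
  refine ⟨m + K, fun y V hV => ?_⟩
  obtain ⟨r, hr, hrV⟩ := Metric.mem_nhds_iff.1 hV
  obtain ⟨_, hpK, w, rfl, z, hz⟩ := hK (g x) y (min r (ε / 2)) (by positivity) (min_le_right _ _)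
  obtain ⟨⟨x₁, hx₁, rfl⟩, hzy⟩ := hz (mem_ball_self (by positivity))
  obtain ⟨x₀, hx₀, rfl⟩ := hball hx₁
  set ω' : ℤ → Fin κ := fun k => if k < m then ω k else w.getD (k - m).toNat i with hω'
  refine ⟨m + w.length, by omega, (ω', x₀), hAB ⟨hIA fun k hk => ?_, hx₀⟩, _,
    hrV (ball_subset_ball (min_le_left _ _) hzy), fun j => ?_⟩
  · have : ω' k = ω k := if_pos (hm k hk)
    simpa only [this] using (hu k hk).2
  · have h₁ : seqComp f (fun k : ℕ => ω' (k : ℤ)) m = g :=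
      seqComp_congr f fun k hk => if_pos (by exact_mod_cast hk)
    have h₂ : ∀ k : ℕ, ω' ((m + k : ℕ) : ℤ) = w.getD k i := fun k => by
      have hk : ¬ ((m + k : ℕ) : ℤ) < m := by omega
      have hk' : (((m + k : ℕ) : ℤ) - m).toNat = k := by omega
      simp only [hω', if_neg hk, hk']
    dsimp only
    rw [seqComp_add, seqComp_add, h₁, wordComp_eq_seqComp f w i, ← seqComp_const f i]
    simp only [h₂, add_assoc]
    exact congrFun (seqComp_congr f fun k _ => by simp) _

theorem dense_exists_mul_lt_sum [CompactSpace X] (hfht : FrequentHittingTimes f)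
    (hcont : ∀ i, Continuous (f i)) (hopen : ∀ i, IsOpenMap (f i)) (hψ : Continuous ψ)
    (i : Fin κ) {b c : ℝ} (hcb : c < b)
    (hb : ∀ n : ℕ, ∃ x, n * b ≤ birkhoffSum (f i) ψ n x) (N : ℕ) :
    Dense {p : (ℤ → Fin κ) × X | ∃ n ≥ N, n * c <
      ∑ j ∈ Finset.range n, ψ (seqComp f (fun m : ℕ => p.1 (m : ℤ)) j p.2)} := by
  refine dense_iff_inter_open.2 fun U hU hne => ?_
  obtain ⟨M, hM⟩ := hfht.exists_shadow hopen i hU hne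
  obtain ⟨C₀, hC₀⟩ := isCompact_univ.exists_bound_of_continuousOn hψ.continuousOn
  set C := max C₀ |c|
  have hψC : ∀ x, -C ≤ ψ x := fun x =>
    neg_le_of_abs_le ((hC₀ x trivial).trans (le_max_left _ _))
  have hcC : c ≤ C := (le_abs_self c).trans (le_max_right _ _)
  have hC0 : 0 ≤ C := (abs_nonneg c).trans (le_max_right _ _)
  obtain ⟨n₀, hn₀⟩ := exists_nat_gt ((1 + 2 * M * C) / (b - c))
  set n := max n₀ N with hn
  have hlarge : 1 + 2 * M * C < n * (b - c) := by
    rw [← div_lt_iff₀ (sub_pos.2 hcb)]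
    exact hn₀.trans_le (by exact_mod_cast le_max_left _ _)
  obtain ⟨y, hy⟩ := hb n
  have hS : Continuous (birkhoffSum (f i) ψ n) :=
    continuous_finsetSum _ fun j _ => hψ.comp ((hcont i).iterate j)
  obtain ⟨q, hqM, p, hpU, z, hz, hpz⟩ := hM y {z | n * b - 1 < birkhoffSum (f i) ψ n z}
    ((isOpen_lt continuous_const hS).mem_nhds (by simp only [Set.mem_ofPred_eq]; linarith))
  refine ⟨p, hpU, q + n, by omega, ?_⟩
  rw [Finset.sum_range_add]
  simp only [hpz]
  have hhead : -(q * C) ≤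
      ∑ j ∈ Finset.range q, ψ (seqComp f (fun m : ℕ => p.1 (m : ℤ)) j p.2) := by
    simpa using Finset.card_nsmul_le_sum (Finset.range q) _ (-C) fun j _ => hψC _
  have htail : n * b - 1 < ∑ j ∈ Finset.range n, ψ ((f i)^[j] z) := hz
  have hqc : q * c ≤ q * C := by gcongr
  have hqM' : q * C ≤ M * C := by gcongr
  push_cast
  linarith

theorem frequently_mul_lt_sum_mem_residual [CompactSpace X] (hfht : FrequentHittingTimes f)
    (hcont : ∀ i, Continuous (f i)) (hopen : ∀ i, IsOpenMap (f i)) (hψ : Continuous ψ)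
    (i : Fin κ) {b c : ℝ} (hcb : c < b)
    (hb : ∀ n : ℕ, ∃ x, n * b ≤ birkhoffSum (f i) ψ n x) :
    {p : (ℤ → Fin κ) × X | ∃ᶠ n : ℕ in atTop, n * c <
      ∑ j ∈ Finset.range n, ψ (seqComp f (fun m : ℕ => p.1 (m : ℤ)) j p.2)} ∈
      residual ((ℤ → Fin κ) × X) := by
  simp only [frequently_atTop, Set.ofPred_forall]
  refine countable_iInter_mem.2 fun N => residual_of_dense_open ?_
    (dense_exists_mul_lt_sum hfht hcont hopen hψ i hcb hb N)
  simp only [Set.ofPred_exists, Set.ofPred_and]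
  refine isOpen_iUnion fun n => isOpen_const.inter (isOpen_lt continuous_const ?_)
  exact continuous_finsetSum _ fun j _ => hψ.comp (continuous_seqComp hcont j)

end Genericity

/-- **Baire genericity of irregular points for the skew product.**
Let `f₁, …, f_κ` be bi-Lipschitz homeomorphisms of a compact metric space `X` generating a
semigroup action with frequent hitting times, and let `ψ` be continuous and not a coboundary
with respect to some generator. Then the irregular set `I_F(φ_ψ)` of the skew product
`F(ω,x) = (σ(ω), f_{ω₀}(x))` over the two-sided shift, i.e. the set of pairs `(ω,x)` whose
Birkhoff averages `(1/n) ∑_{j<n} ψ(f_ω^j(x))` do not converge, is a residual subset of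
`Σ̂_κ × X`. -/
theorem irregular_residual_skew_product {X : Type*} [MetricSpace X] [CompactSpace X]
    [MeasurableSpace X] [BorelSpace X] (κ : ℕ) (hκ : 1 ≤ κ)
    (f : Fin κ → X ≃ X)
    (hLip : ∀ i, ∃ L : NNReal, LipschitzWith L (f i))
    (hLipInv : ∀ i, ∃ L : NNReal, LipschitzWith L (f i).symm)
    (ψ : X → ℝ) (hψ : Continuous ψ)
    (hfht : FrequentHittingTimes (fun i => (f i : X → X)))
    (hcob : ∃ i, NotCoboundary (f i : X → X) ψ) :
    {p : (ℤ → Fin κ) × X | ¬ ∃ l : ℝ, Tendsto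
        (fun n : ℕ => (n : ℝ)⁻¹ *
          ∑ j ∈ Finset.range n,
            ψ (seqComp (fun i => (f i : X → X)) (fun m : ℕ => p.1 (m : ℤ)) j p.2))
        atTop (nhds l)}
      ∈ residual ((ℤ → Fin κ) × X) := by
  obtain ⟨i, μ₁, μ₂, _, _, hμ₁, hμ₂, hlt⟩ := hcob
  have hcont : ∀ i, Continuous (f i) := fun i => (hLip i).choose_spec.continuous
  have hopen : ∀ i, IsOpenMap (f i) := fun i =>
    (Homeomorph.mk (f i) (hcont i) (hLipInv i).choose_spec.continuous).isOpenMap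
  obtain ⟨c₁, h₁, h₁₂⟩ := exists_between hlt
  obtain ⟨c₂, h₂, h₃⟩ := exists_between h₁₂
  have hlow := frequently_mul_lt_sum_mem_residual hfht hcont hopen hψ.neg i (neg_lt_neg h₁)
    (by
      rw [← integral_neg]
      exact exists_mul_integral_le_birkhoffSum (hcont i) hψ.neg μ₁ hμ₁)
  have hhigh := frequently_mul_lt_sum_mem_residual hfht hcont hopen hψ i h₃
    (exists_mul_integral_le_birkhoffSum (hcont i) hψ μ₂ hμ₂)
  filter_upwards [hlow, hhigh] with p hp₁ hp₂
  rintro ⟨l, hl⟩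
  have hle : l ≤ c₁ := by
    refine le_of_tendsto_of_frequently hl ((hp₁.and_eventually (eventually_gt_atTop 0)).mono ?_)
    rintro n ⟨h, hn⟩
    simp only [Pi.neg_apply, Finset.sum_neg_distrib] at h
    rw [inv_mul_le_iff₀ (by exact_mod_cast hn)]
    linarith
  have hge : c₂ ≤ l := by
    refine ge_of_tendsto_of_frequently hl ((hp₂.and_eventually (eventually_gt_atTop 0)).mono ?_)
    rintro n ⟨h, hn⟩
    rw [le_inv_mul_iff₀ (by exact_mod_cast hn)]
    exact h.le
  linarith

end
end

section
/- Let (X,d) be a compact metric space, κ ≥ 1, and let f₁,…,f_κ : X → X be homeomorphisms. Suppose there is a nonempty subset S ⊆ {1,…,κ} such that f_i is an isometry of X for every i ∈ S and the sub-semigroup action generated by {f_i : i ∈ S} is minimal, i.e. for every x ∈ X there exists an infinite word ω ∈ S^ℕ such that {f_ω^n(x) : n ≥ 0} is dense in X. Then the semigroup action generated by f₁,…,f_κ has frequent hitting times. -/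
open Metric

noncomputable section

theorem wordComp_append_singleton {X : Type*} {κ : ℕ} (f : Fin κ → X → X) (w : List (Fin κ))
    (i : Fin κ) : wordComp f (w ++ [i]) = f i ∘ wordComp f w := by
  funext x
  simp [wordComp]

theorem seqComp_eq_wordComp {X : Type*} {κ : ℕ} (f : Fin κ → X → X) (ω : ℕ → Fin κ) (n : ℕ) :
    seqComp f ω n = wordComp f ((List.range n).map ω) := by
  induction n with
  | zero => rfl
  | succ n ih =>
    rw [List.range_succ, List.map_append, List.map_singleton, wordComp_append_singleton, ← ih]
    rfl

theorem surjective_wordComp {X : Type*} {κ : ℕ} {f : Fin κ → X → X}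
    (hf : ∀ i, Function.Surjective (f i)) (w : List (Fin κ)) :
    Function.Surjective (wordComp f w) := by
  induction w using List.reverseRecOn with
  | nil => exact Function.surjective_id
  | append_singleton w i ih =>
    rw [wordComp_append_singleton]
    exact (hf i).comp ih

theorem isometry_wordComp {X : Type*} [MetricSpace X] {κ : ℕ} {f : Fin κ → X → X}
    {w : List (Fin κ)} (hf : ∀ i ∈ w, Isometry (f i)) : Isometry (wordComp f w) := by
  induction w using List.reverseRecOn with
  | nil => exact isometry_id
  | append_singleton w i ih =>
    rw [wordComp_append_singleton]
    exact (hf i (by simp)).comp (ih fun j hj => hf j (by simp [hj]))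

/-- A minimal collection of isometries of a compact space moves every point `δ`-close to every
other point within a uniformly bounded number of steps. -/
theorem exists_bounded_word_dist_lt {X : Type*} [MetricSpace X] [CompactSpace X] {κ : ℕ}
    {f : Fin κ → X → X} {S : Set (Fin κ)} (hiso : ∀ i ∈ S, Isometry (f i))
    (hmin : ∀ x : X, ∃ ω : ℕ → Fin κ, (∀ n, ω n ∈ S) ∧
      Dense (Set.range fun n : ℕ => seqComp f ω n x)) {δ : ℝ} (hδ : 0 < δ) :
    ∃ K : ℕ, ∀ x y : X, ∃ w : List (Fin κ), w.length ≤ K ∧ (∀ i ∈ w, i ∈ S) ∧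
      dist (wordComp f w x) y < δ := by
  suffices h : ∃ K : ℕ, ∀ q ∈ (Set.univ : Set (X × X)), ∃ w : List (Fin κ),
      w.length ≤ K ∧ (∀ i ∈ w, i ∈ S) ∧ dist (wordComp f w q.1) q.2 < δ by
    obtain ⟨K, hK⟩ := h
    exact ⟨K, fun x y => hK (x, y) trivial⟩
  refine isCompact_univ.induction_on (p := fun s : Set (X × X) => ∃ K : ℕ, ∀ q ∈ s,
    ∃ w : List (Fin κ), w.length ≤ K ∧ (∀ i ∈ w, i ∈ S) ∧ dist (wordComp f w q.1) q.2 < δ)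
    ⟨0, by simp⟩ ?_ ?_ ?_
  · rintro s t hst ⟨K, hK⟩
    exact ⟨K, fun q hq => hK q (hst hq)⟩
  · rintro s t ⟨K, hK⟩ ⟨L, hL⟩
    refine ⟨max K L, ?_⟩
    rintro q (hq | hq)
    · obtain ⟨w, hw, h⟩ := hK q hq
      exact ⟨w, hw.trans (le_max_left _ _), h⟩
    · obtain ⟨w, hw, h⟩ := hL q hq
      exact ⟨w, hw.trans (le_max_right _ _), h⟩
  · rintro ⟨a, b⟩ -
    obtain ⟨ω, hω, hdense⟩ := hmin a
    obtain ⟨_, ⟨n, rfl⟩, hn⟩ := hdense.exists_dist_lt b hδ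
    have hS : ∀ i ∈ (List.range n).map ω, i ∈ S := by
      simp only [List.mem_map]
      rintro _ ⟨k, -, rfl⟩
      exact hω k
    have hcont := (isometry_wordComp fun i hi => hiso i (hS i hi)).continuous
    refine ⟨{q : X × X | dist (wordComp f ((List.range n).map ω) q.1) q.2 < δ},
      mem_nhdsWithin_of_mem_nhds (IsOpen.mem_nhds ?_ ?_), n, fun q hq => ⟨_, by simp, hS, hq⟩⟩
    · exact isOpen_lt ((hcont.comp continuous_fst).dist continuous_snd) continuous_const
    · simpa only [Set.mem_ofPred_eq, dist_comm b, seqComp_eq_wordComp] using hn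

/-- **A minimal sub-collection of isometries forces frequent hitting times.**
If `f₁, …, f_κ` are homeomorphisms of a compact metric space and there is a nonempty
`S ⊆ {1,…,κ}` such that each `f_i`, `i ∈ S`, is an isometry and the sub-semigroup action
generated by `{f_i : i ∈ S}` is minimal — for every `x ∈ X` there is an infinite word `ω`
with letters in `S` whose orbit `{f_ω^n(x) : n ≥ 0}` is dense in `X` — then the whole
semigroup action has frequent hitting times. -/
theorem frequentHittingTimes_of_minimal_isometries {X : Type*} [MetricSpace X]
    [CompactSpace X] (κ : ℕ) (f : Fin κ → X ≃ₜ X)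
    (S : Set (Fin κ)) (hS : S.Nonempty)
    (hiso : ∀ i ∈ S, Isometry (f i : X → X))
    (hmin : ∀ x : X, ∃ ω : ℕ → Fin κ, (∀ n, ω n ∈ S) ∧
      Dense (Set.range fun n : ℕ => seqComp (fun i => (f i : X → X)) ω n x)) :
    FrequentHittingTimes (fun i => (f i : X → X)) := by
  intro ε hε
  obtain ⟨K, hK⟩ := exists_bounded_word_dist_lt (f := fun i => (f i : X → X)) hiso hmin
    (half_pos hε)
  refine ⟨K, fun x₁ x₂ r hr hrε => ?_⟩
  obtain ⟨w, hwK, hwS, hw⟩ := hK x₁ x₂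
  refine ⟨w.length, hwK, w, rfl, x₂, fun y hy => ⟨?_, ball_subset_ball (by linarith) hy⟩⟩
  obtain ⟨x, rfl⟩ := surjective_wordComp (fun i => (f i).surjective) w y
  refine ⟨x, ?_, rfl⟩
  have hisom := isometry_wordComp (f := fun i => (f i : X → X)) fun i hi => hiso i (hwS i hi)
  rw [mem_ball] at hy ⊢
  rw [← hisom.dist_eq]
  have := dist_triangle_right (wordComp (fun i => (f i : X → X)) w x)
    (wordComp (fun i => (f i : X → X)) w x₁) x₂
  linarith

end
end
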